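/- arXiv:2506.00961 — 3 statements merged into one kernel-verified Lean document; each statement's English description precedes it below -/
import Mathlib

section
/- Consider the DAT-SGD sequences generated with a gossip matrix P that satisfies the ρ-contraction property for some ρ ∈ (0,1]. Then for every t ≥ 1 the consensus distances satisfy the recursion Γ_{t+1} ≤ (1 − ρ/2)·Γ_t + (4δ_t²/ρ)·(Ξ_t + η² α_t² Ψ_t), where δ_t := α_t/α_{1:t}. -/
/-!
The consensus distance `C` is a squared seminorm, so it obeys Young's inequality
`C (u + v) ≤ (1 + β) C u + (1 + β⁻¹) C v`. The mixing step shrinks it by the factor `1 - ρ`. With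
`β = ρ / 2` this contraction absorbs the factor `1 + β` on the old iterates and leaves `1 - ρ / 2`,
at the price of a factor `2 / ρ` on the perturbation `δ • (w - η α • g)`. Young's inequality with
`β = 1` then separates `w` from `g`.
-/

lemma norm_add_sq_le_young {E : Type*} [SeminormedAddGroup E] {β : ℝ} (hβ : 0 < β) (u v : E) :
    ‖u + v‖ ^ 2 ≤ (1 + β) * ‖u‖ ^ 2 + (1 + β⁻¹) * ‖v‖ ^ 2 :=
  calc ‖u + v‖ ^ 2 ≤ (‖u‖ + ‖v‖) ^ 2 := by gcongr; exact norm_add_le u v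
    _ = ‖u‖ ^ 2 + 2 * ‖u‖ * ‖v‖ + ‖v‖ ^ 2 := add_sq _ _
    _ ≤ ‖u‖ ^ 2 + (β * ‖u‖ ^ 2 + β⁻¹ * ‖v‖ ^ 2) + ‖v‖ ^ 2 := by
      gcongr
      exact two_mul_le_add_mul_sq hβ
    _ = (1 + β) * ‖u‖ ^ 2 + (1 + β⁻¹) * ‖v‖ ^ 2 := by ring

lemma sum_Icc_pred_div_sum_Icc_mem_Icc_zero_one {𝕜 : Type*} [Field 𝕜] [LinearOrder 𝕜]
    [IsStrictOrderedRing 𝕜] {α : ℕ → 𝕜} {m t : ℕ} (hα : ∀ τ ≥ m, 0 ≤ α τ) (hαm : 0 < α m)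
    (hmt : m ≤ t) :
    (∑ τ ∈ Finset.Icc m (t - 1), α τ) / ∑ τ ∈ Finset.Icc m t, α τ ∈ Set.Icc 0 1 := by
  have nonneg_of_mem : ∀ n, ∀ τ ∈ Finset.Icc m n, 0 ≤ α τ :=
    fun n τ hτ => hα τ (Finset.mem_Icc.1 hτ).1
  have total_pos : 0 < ∑ τ ∈ Finset.Icc m t, α τ :=
    Finset.sum_pos' (nonneg_of_mem t) ⟨m, Finset.left_mem_Icc.2 hmt, hαm⟩
  have le_total : ∑ τ ∈ Finset.Icc m (t - 1), α τ ≤ ∑ τ ∈ Finset.Icc m t, α τ :=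
    Finset.sum_le_sum_of_subset_of_nonneg (Finset.Icc_subset_Icc_right (Nat.sub_le t 1))
      fun τ hτ _ => nonneg_of_mem t τ hτ
  exact ⟨div_nonneg (Finset.sum_nonneg (nonneg_of_mem _)) total_pos.le,
    (div_le_one total_pos).2 le_total⟩

section Mean

variable {ι E : Type*} [Fintype ι] [AddCommGroup E] [Module ℝ E]

/-- The network average `Ȳ = (1/M) ∑ⱼ Yⱼ` of one vector per node, as a linear map. It is a single
vector rather than the constant family `Y · (1/M)𝟙𝟙ᵀ`. -/
noncomputable def nodeMean : (ι → E) →ₗ[ℝ] E :=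
  (Fintype.card ι : ℝ)⁻¹ • ∑ j, LinearMap.proj j

lemma nodeMean_apply (Y : ι → E) : nodeMean Y = (Fintype.card ι : ℝ)⁻¹ • ∑ j, Y j := by
  simp [nodeMean]

lemma nodeMean_sum_smul {P : Matrix ι ι ℝ} (hP : ∀ j, ∑ i, P i j = 1) (Y : ι → E) :
    nodeMean (fun i => ∑ j, P i j • Y j) = nodeMean Y := by
  simp only [nodeMean_apply]
  rw [Finset.sum_comm]
  simp only [← Finset.sum_smul, hP, one_smul]

end Mean

section ConsensusDist

variable {ι E : Type*} [Fintype ι] [SeminormedAddCommGroup E] [NormedSpace ℝ E]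

/-- The consensus distance `(1/M) ∑ᵢ ‖Yᵢ - Ȳ‖²` of one vector per node: the quantities `Γ_t`, `Ξ_t`
and `Ψ_t` are the consensus distances of the families `x_t`, `w_t` and `g_t`. -/
noncomputable def consensusDist (Y : ι → E) : ℝ :=
  (Fintype.card ι : ℝ)⁻¹ * ∑ i, ‖Y i - nodeMean Y‖ ^ 2

lemma consensusDist_nonneg (Y : ι → E) : 0 ≤ consensusDist Y := by
  unfold consensusDist
  positivity

lemma consensusDist_smul (c : ℝ) (Y : ι → E) :
    consensusDist (c • Y) = c ^ 2 * consensusDist Y := by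
  simp only [consensusDist, map_smul, Pi.smul_apply, ← smul_sub, norm_smul, mul_pow,
    Real.norm_eq_abs, sq_abs, ← Finset.mul_sum]
  ring

lemma consensusDist_add_le_young {β : ℝ} (hβ : 0 < β) (u v : ι → E) :
    consensusDist (u + v) ≤ (1 + β) * consensusDist u + (1 + β⁻¹) * consensusDist v := by
  unfold consensusDist
  calc (Fintype.card ι : ℝ)⁻¹ * ∑ i, ‖(u + v) i - nodeMean (u + v)‖ ^ 2
      ≤ (Fintype.card ι : ℝ)⁻¹ * ∑ i, ((1 + β) * ‖u i - nodeMean u‖ ^ 2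
          + (1 + β⁻¹) * ‖v i - nodeMean v‖ ^ 2) := by
        gcongr with i
        rw [map_add, Pi.add_apply, add_sub_add_comm]
        exact norm_add_sq_le_young hβ _ _
    _ = _ := by
        simp only [Finset.sum_add_distrib, ← Finset.mul_sum]
        ring

lemma consensusDist_sub_smul_le (c : ℝ) (w g : ι → E) :
    consensusDist (w - c • g) ≤ 2 * (consensusDist w + c ^ 2 * consensusDist g) := by
  have young := consensusDist_add_le_young one_pos w (-c • g)
  rw [consensusDist_smul, neg_sq, neg_smul, ← sub_eq_add_neg] at young
  linarith

lemma consensusDist_sum_smul_le {P : Matrix ι ι ℝ} (hP : ∀ j, ∑ i, P i j = 1) {c : ℝ} {Y : ι → E}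
    (hY : ∑ i, ‖(∑ j, P i j • Y j) - nodeMean Y‖ ^ 2 ≤ c * ∑ i, ‖Y i - nodeMean Y‖ ^ 2) :
    consensusDist (fun i => ∑ j, P i j • Y j) ≤ c * consensusDist Y := by
  rw [consensusDist, consensusDist, nodeMean_sum_smul hP, mul_left_comm]
  gcongr

lemma consensusDist_contraction_add_le {mix : (ι → E) → ι → E} {ρ : ℝ} (hρ : ρ ∈ Set.Ioc 0 1)
    (hmix : ∀ Y, consensusDist (mix Y) ≤ (1 - ρ) * consensusDist Y) (u v : ι → E) :
    consensusDist (mix (u + v)) ≤ (1 - ρ / 2) * consensusDist u + 2 / ρ * consensusDist v := by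
  obtain ⟨hρ_pos, hρ_le⟩ := hρ
  have coeff_u : (1 - ρ) * (1 + ρ / 2) ≤ 1 - ρ / 2 := by nlinarith
  have coeff_v : (1 - ρ) * (1 + (ρ / 2)⁻¹) ≤ 2 / ρ := by
    have expand : (1 - ρ) * (1 + (ρ / 2)⁻¹) = 2 / ρ - (1 + ρ) := by
      field_simp
      ring
    linarith
  calc consensusDist (mix (u + v))
      ≤ (1 - ρ) * consensusDist (u + v) := hmix _
    _ ≤ (1 - ρ) * ((1 + ρ / 2) * consensusDist u + (1 + (ρ / 2)⁻¹) * consensusDist v) :=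
        mul_le_mul_of_nonneg_left (consensusDist_add_le_young (half_pos hρ_pos) u v)
          (sub_nonneg.2 hρ_le)
    _ = (1 - ρ) * (1 + ρ / 2) * consensusDist u
          + (1 - ρ) * (1 + (ρ / 2)⁻¹) * consensusDist v := by ring
    _ ≤ (1 - ρ / 2) * consensusDist u + 2 / ρ * consensusDist v :=
        add_le_add (mul_le_mul_of_nonneg_right coeff_u (consensusDist_nonneg u))
          (mul_le_mul_of_nonneg_right coeff_v (consensusDist_nonneg v))

theorem stmt_6_general (η : ℝ) {α : ℕ → ℝ} (hα_nonneg : ∀ t ≥ 1, 0 ≤ α t) (hα1 : 0 < α 1)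
    {A : ℕ → ℝ} (hA : ∀ t, A t = ∑ τ ∈ Finset.Icc 1 t, α τ)
    {mix : (ι → E) → ι → E} {ρ : ℝ} (hρ : ρ ∈ Set.Ioc 0 1)
    (hmix : ∀ Y, consensusDist (mix Y) ≤ (1 - ρ) * consensusDist Y)
    {g w x : ℕ → ι → E}
    (hxrec : ∀ t ≥ 1, x (t + 1) =
      mix ((A (t - 1) / A t) • x t + (α t / A t) • (w t - (η * α t) • g t)))
    {t : ℕ} (ht : 1 ≤ t) :
    consensusDist (x (t + 1)) ≤ (1 - ρ / 2) * consensusDist (x t)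
      + (4 * (α t / A t) ^ 2 / ρ)
        * (consensusDist (w t) + η ^ 2 * (α t) ^ 2 * consensusDist (g t)) := by
  have ratio_mem : A (t - 1) / A t ∈ Set.Icc 0 1 := by
    simpa only [hA] using sum_Icc_pred_div_sum_Icc_mem_Icc_zero_one hα_nonneg hα1 ht
  have ratio_sq_le : (A (t - 1) / A t) ^ 2 ≤ 1 := pow_le_one₀ ratio_mem.1 ratio_mem.2
  have contraction_coeff_nonneg : 0 ≤ 1 - ρ / 2 := by linarith [hρ.2]
  have ρ_pos : 0 < ρ := hρ.1
  rw [hxrec t ht]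
  calc consensusDist (mix ((A (t - 1) / A t) • x t + (α t / A t) • (w t - (η * α t) • g t)))
      ≤ (1 - ρ / 2) * ((A (t - 1) / A t) ^ 2 * consensusDist (x t))
          + 2 / ρ * ((α t / A t) ^ 2 * consensusDist (w t - (η * α t) • g t)) := by
        simpa only [consensusDist_smul] using consensusDist_contraction_add_le hρ hmix
          ((A (t - 1) / A t) • x t) ((α t / A t) • (w t - (η * α t) • g t))
    _ ≤ (1 - ρ / 2) * consensusDist (x t) + 2 / ρ * ((α t / A t) ^ 2
          * (2 * (consensusDist (w t) + (η * α t) ^ 2 * consensusDist (g t)))) := by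
        gcongr
        · exact mul_le_of_le_one_left (consensusDist_nonneg _) ratio_sq_le
        · exact consensusDist_sub_smul_le _ _ _
    _ = _ := by ring

end ConsensusDist

/-- For DAT-SGD with a gossip matrix `P` satisfying the ρ-contraction
property, for every `t ≥ 1` the consensus distances satisfy
`Γ_{t+1} ≤ (1 − ρ/2)·Γ_t + (4δ_t²/ρ)·(Ξ_t + η² α_t² Ψ_t)` where `δ_t = α_t/α_{1:t}`. -/
theorem stmt_6
    (d M : ℕ) (hd : 1 ≤ d) (hM : 1 ≤ M)
    (η : ℝ) (hη : 0 < η)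
    (α : ℕ → ℝ) (hα_nonneg : ∀ t ≥ 1, 0 ≤ α t) (hα1 : 0 < α 1)
    (A : ℕ → ℝ) (hA : ∀ t, A t = ∑ τ ∈ Finset.Icc 1 t, α τ)
    (P : Matrix (Fin M) (Fin M) ℝ)
    (hP_symm : P.IsSymm)
    (hP_nonneg : ∀ i j, 0 ≤ P i j) (hP_le_one : ∀ i j, P i j ≤ 1)
    (hP_rows : ∀ i, ∑ j, P i j = 1) (hP_cols : ∀ j, ∑ i, P i j = 1)
    (w₁ : EuclideanSpace ℝ (Fin d))
    (g w x : ℕ → Fin M → EuclideanSpace ℝ (Fin d))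
    (hw1 : ∀ i, w 1 i = w₁) (hx1 : ∀ i, x 1 i = w₁)
    (hwrec : ∀ t ≥ 1, ∀ i,
      w (t + 1) i = ∑ j, P i j • (w t j - (η * α t) • g t j))
    (hxrec : ∀ t ≥ 1, ∀ i,
      x (t + 1) i = ∑ j, P i j •
        ((A (t - 1) / A t) • x t j + (α t / A t) • (w t j - (η * α t) • g t j)))
    (ρ : ℝ) (hρ : ρ ∈ Set.Ioc (0 : ℝ) 1)
    (hP_contract : ∀ Y : Fin M → EuclideanSpace ℝ (Fin d),
      ∑ i, ‖(∑ j, P i j • Y j) - (M : ℝ)⁻¹ • ∑ j, Y j‖ ^ 2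
        ≤ (1 - ρ) * ∑ i, ‖Y i - (M : ℝ)⁻¹ • ∑ j, Y j‖ ^ 2)
    (Γ Ξ Ψ : ℕ → ℝ)
    (hΓ : ∀ t, Γ t = (M : ℝ)⁻¹ * ∑ i, ‖x t i - (M : ℝ)⁻¹ • ∑ j, x t j‖ ^ 2)
    (hΞ : ∀ t, Ξ t = (M : ℝ)⁻¹ * ∑ i, ‖w t i - (M : ℝ)⁻¹ • ∑ j, w t j‖ ^ 2)
    (hΨ : ∀ t, Ψ t = (M : ℝ)⁻¹ * ∑ i, ‖g t i - (M : ℝ)⁻¹ • ∑ j, g t j‖ ^ 2)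
    :
    ∀ t ≥ 1,
      Γ (t + 1) ≤ (1 - ρ / 2) * Γ t
        + (4 * (α t / A t) ^ 2 / ρ) * (Ξ t + η ^ 2 * (α t) ^ 2 * Ψ t) := by
  intro t ht
  have hmix : ∀ Y : Fin M → EuclideanSpace ℝ (Fin d),
      consensusDist (fun i => ∑ j, P i j • Y j) ≤ (1 - ρ) * consensusDist Y := fun Y =>
    consensusDist_sum_smul_le hP_cols <| by
      simpa only [nodeMean_apply, Fintype.card_fin] using hP_contract Y
  simpa only [hΓ, hΞ, hΨ, consensusDist, nodeMean_apply, Fintype.card_fin] using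
    stmt_6_general η hα_nonneg hα1 hA hρ hmix (fun s hs => funext (hxrec s hs)) ht
end

section
/- Consider the DAT-SGD sequences generated with a gossip matrix P that satisfies the ρ-contraction property for some ρ ∈ (0,1]. Then for every t ≥ 1 the consensus distance of the iterates satisfies the recursion Ξ_{t+1} ≤ (1 − ρ/2)·Ξ_t + (2η² α_t²/ρ)·Ψ_t. -/
/-! The average minimises the sum of squared distances, so the consensus distance after gossip is
at most the mean squared distance to the average before gossip, which the contraction property
bounds by `1 - ρ` times the consensus distance before gossip. Young's inequality with parameter
`ρ / 2` then separates the iterates from the gradient step, since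
`(1 - ρ) * (1 + ρ / 2) ≤ 1 - ρ / 2` and `(1 - ρ) * (1 + (ρ / 2)⁻¹) ≤ 2 / ρ`. -/

lemma norm_sub_sq_le_one_add_mul_add {E : Type*} [SeminormedAddGroup E] {s : ℝ} (hs : 0 < s)
    (a b : E) : ‖a - b‖ ^ 2 ≤ (1 + s) * ‖a‖ ^ 2 + (1 + s⁻¹) * ‖b‖ ^ 2 := by
  have young : (1 + s) * ‖a‖ ^ 2 + (1 + s⁻¹) * ‖b‖ ^ 2 - (‖a‖ + ‖b‖) ^ 2
      = s⁻¹ * (s * ‖a‖ - ‖b‖) ^ 2 := by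
    field_simp
    ring
  calc ‖a - b‖ ^ 2 ≤ (‖a‖ + ‖b‖) ^ 2 := by gcongr; exact norm_sub_le a b
    _ ≤ (1 + s) * ‖a‖ ^ 2 + (1 + s⁻¹) * ‖b‖ ^ 2 :=
      sub_nonneg.1 (young ▸ by positivity)

section Average

variable {ι E : Type*} [Fintype ι] [AddCommGroup E] [Module ℝ E]

/-- The average of a family of vectors over all agents, the bar `Ȳ` of the paper; it is `0` when
there are no agents. -/
noncomputable def agentAverage (Y : ι → E) : E :=
  (Fintype.card ι : ℝ)⁻¹ • ∑ i, Y i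

lemma agentAverage_sub (Y Z : ι → E) :
    agentAverage (Y - Z) = agentAverage Y - agentAverage Z := by
  simp only [agentAverage, Pi.sub_apply, Finset.sum_sub_distrib, smul_sub]

lemma agentAverage_smul (c : ℝ) (Y : ι → E) : agentAverage (c • Y) = c • agentAverage Y := by
  simp only [agentAverage, Pi.smul_apply, ← Finset.smul_sum, smul_comm c]

lemma sum_sub_agentAverage_eq_zero [Nonempty ι] (Y : ι → E) : ∑ i, (Y i - agentAverage Y) = 0 := by
  have card_ne_zero : (Fintype.card ι : ℝ) ≠ 0 := Nat.cast_ne_zero.2 Fintype.card_ne_zero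
  rw [Finset.sum_sub_distrib, Finset.sum_const, Finset.card_univ, agentAverage,
    ← Nat.cast_smul_eq_nsmul ℝ, smul_inv_smul₀ card_ne_zero, sub_self]

end Average

lemma sum_norm_sub_agentAverage_sq_le {ι E : Type*} [Fintype ι] [Nonempty ι]
    [SeminormedAddCommGroup E] [InnerProductSpace ℝ E] (Y : ι → E) (a : E) :
    ∑ i, ‖Y i - agentAverage Y‖ ^ 2 ≤ ∑ i, ‖Y i - a‖ ^ 2 := by
  have sum_inner_eq_zero : ∑ i, inner ℝ (Y i - agentAverage Y) (agentAverage Y - a) = 0 := by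
    rw [← sum_inner, sum_sub_agentAverage_eq_zero, inner_zero_left]
  calc ∑ i, ‖Y i - agentAverage Y‖ ^ 2
      = ∑ i, (‖Y i - agentAverage Y‖ ^ 2
          + 2 * inner ℝ (Y i - agentAverage Y) (agentAverage Y - a)) := by
        rw [Finset.sum_add_distrib, ← Finset.mul_sum, sum_inner_eq_zero, mul_zero, add_zero]
    _ ≤ ∑ i, ‖Y i - a‖ ^ 2 := by
        refine Finset.sum_le_sum fun i _ => ?_
        rw [← sub_add_sub_cancel (Y i) (agentAverage Y) a, norm_add_sq_real]
        exact le_add_of_nonneg_right (sq_nonneg _)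

section ConsensusDistance

variable {ι E : Type*} [Fintype ι] [SeminormedAddCommGroup E]

/-- The mean squared distance of the agents' vectors to their average: `Ξ_t` for the iterates and
`Ψ_t` for the gradients of the paper. -/
noncomputable def consensusDistance [Module ℝ E] (Y : ι → E) : ℝ :=
  (Fintype.card ι : ℝ)⁻¹ * ∑ i, ‖Y i - agentAverage Y‖ ^ 2

lemma consensusDistance_smul [NormedSpace ℝ E] (c : ℝ) (Y : ι → E) :
    consensusDistance (c • Y) = c ^ 2 * consensusDistance Y := by
  simp only [consensusDistance, agentAverage_smul, Pi.smul_apply, ← smul_sub, norm_smul, mul_pow,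
    Real.norm_eq_abs, sq_abs, ← Finset.mul_sum]
  ring

lemma consensusDistance_nonneg [Module ℝ E] (Y : ι → E) : 0 ≤ consensusDistance Y := by
  unfold consensusDistance
  positivity

lemma consensusDistance_sub_le [Module ℝ E] {s : ℝ} (hs : 0 < s) (Y Z : ι → E) :
    consensusDistance (Y - Z)
      ≤ (1 + s) * consensusDistance Y + (1 + s⁻¹) * consensusDistance Z := by
  have sum_le : ∑ i, ‖(Y - Z) i - agentAverage (Y - Z)‖ ^ 2
      ≤ (1 + s) * ∑ i, ‖Y i - agentAverage Y‖ ^ 2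
        + (1 + s⁻¹) * ∑ i, ‖Z i - agentAverage Z‖ ^ 2 := by
    rw [Finset.mul_sum, Finset.mul_sum, ← Finset.sum_add_distrib]
    refine Finset.sum_le_sum fun i _ => ?_
    rw [agentAverage_sub, Pi.sub_apply, sub_sub_sub_comm]
    exact norm_sub_sq_le_one_add_mul_add hs _ _
  unfold consensusDistance
  refine (mul_le_mul_of_nonneg_left sum_le (by positivity)).trans_eq ?_
  ring

lemma one_sub_mul_consensusDistance_sub_le [Module ℝ E] {ρ : ℝ} (hρ : ρ ∈ Set.Ioc (0 : ℝ) 1)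
    (Y Z : ι → E) :
    (1 - ρ) * consensusDistance (Y - Z)
      ≤ (1 - ρ / 2) * consensusDistance Y + 2 / ρ * consensusDistance Z := by
  obtain ⟨ρ_pos, ρ_le_one⟩ := hρ
  have left_coeff_le : (1 - ρ) * (1 + ρ / 2) ≤ 1 - ρ / 2 := by
    linarith [sq_nonneg ρ]
  have right_coeff_le : (1 - ρ) * (1 + (ρ / 2)⁻¹) ≤ 2 / ρ := by
    have : (1 - ρ) * (1 + (ρ / 2)⁻¹) = 2 / ρ - (1 + ρ) := by
      field_simp
      ring
    linarith
  calc (1 - ρ) * consensusDistance (Y - Z)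
      ≤ (1 - ρ) * ((1 + ρ / 2) * consensusDistance Y
          + (1 + (ρ / 2)⁻¹) * consensusDistance Z) :=
        mul_le_mul_of_nonneg_left (consensusDistance_sub_le (half_pos ρ_pos) Y Z)
          (sub_nonneg.2 ρ_le_one)
    _ = (1 - ρ) * (1 + ρ / 2) * consensusDistance Y
          + (1 - ρ) * (1 + (ρ / 2)⁻¹) * consensusDistance Z := by ring
    _ ≤ (1 - ρ / 2) * consensusDistance Y + 2 / ρ * consensusDistance Z := by
        gcongr <;> exact consensusDistance_nonneg _

lemma consensusDistance_le_of_sum_norm_sub_sq_le [Nonempty ι] [InnerProductSpace ℝ E] {q : ℝ}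
    {Y Z : ι → E} (h : ∑ i, ‖Z i - agentAverage Y‖ ^ 2 ≤ q * ∑ i, ‖Y i - agentAverage Y‖ ^ 2) :
    consensusDistance Z ≤ q * consensusDistance Y := by
  unfold consensusDistance
  rw [mul_left_comm]
  gcongr
  exact (sum_norm_sub_agentAverage_sq_le Z _).trans h

end ConsensusDistance

theorem stmt_7_general {ι E : Type*} [Fintype ι] [Nonempty ι]
    [SeminormedAddCommGroup E] [InnerProductSpace ℝ E]
    {η : ℝ} {α : ℕ → ℝ} {mix : (ι → E) → ι → E} {g w : ℕ → ι → E}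
    (hw : ∀ t ≥ 1, w (t + 1) = mix (w t - (η * α t) • g t))
    {ρ : ℝ} (hρ : ρ ∈ Set.Ioc (0 : ℝ) 1)
    (hmix : ∀ Y, ∑ i, ‖mix Y i - agentAverage Y‖ ^ 2
      ≤ (1 - ρ) * ∑ i, ‖Y i - agentAverage Y‖ ^ 2) :
    ∀ t ≥ 1, consensusDistance (w (t + 1))
      ≤ (1 - ρ / 2) * consensusDistance (w t)
        + (2 * η ^ 2 * (α t) ^ 2 / ρ) * consensusDistance (g t) := by
  intro t ht
  calc consensusDistance (w (t + 1))
      ≤ (1 - ρ) * consensusDistance (w t - (η * α t) • g t) :=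
        hw t ht ▸ consensusDistance_le_of_sum_norm_sub_sq_le (hmix _)
    _ ≤ (1 - ρ / 2) * consensusDistance (w t) + 2 / ρ * consensusDistance ((η * α t) • g t) :=
        one_sub_mul_consensusDistance_sub_le hρ _ _
    _ = (1 - ρ / 2) * consensusDistance (w t)
          + (2 * η ^ 2 * (α t) ^ 2 / ρ) * consensusDistance (g t) := by
        rw [consensusDistance_smul]
        ring

/-- For DAT-SGD with a gossip matrix `P` satisfying the ρ-contraction
property, for every `t ≥ 1` the consensus distance of the iterates satisfies
`Ξ_{t+1} ≤ (1 − ρ/2)·Ξ_t + (2η² α_t²/ρ)·Ψ_t`. -/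
theorem stmt_7
    (d M : ℕ) (hd : 1 ≤ d) (hM : 1 ≤ M)
    (η : ℝ) (hη : 0 < η)
    (α : ℕ → ℝ) (hα_nonneg : ∀ t ≥ 1, 0 ≤ α t) (hα1 : 0 < α 1)
    (A : ℕ → ℝ) (hA : ∀ t, A t = ∑ τ ∈ Finset.Icc 1 t, α τ)
    (P : Matrix (Fin M) (Fin M) ℝ)
    (hP_symm : P.IsSymm)
    (hP_nonneg : ∀ i j, 0 ≤ P i j) (hP_le_one : ∀ i j, P i j ≤ 1)
    (hP_rows : ∀ i, ∑ j, P i j = 1) (hP_cols : ∀ j, ∑ i, P i j = 1)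
    (w₁ : EuclideanSpace ℝ (Fin d))
    (g w x : ℕ → Fin M → EuclideanSpace ℝ (Fin d))
    (hw1 : ∀ i, w 1 i = w₁) (hx1 : ∀ i, x 1 i = w₁)
    (hwrec : ∀ t ≥ 1, ∀ i,
      w (t + 1) i = ∑ j, P i j • (w t j - (η * α t) • g t j))
    (hxrec : ∀ t ≥ 1, ∀ i,
      x (t + 1) i = ∑ j, P i j •
        ((A (t - 1) / A t) • x t j + (α t / A t) • (w t j - (η * α t) • g t j)))
    (ρ : ℝ) (hρ : ρ ∈ Set.Ioc (0 : ℝ) 1)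
    (hP_contract : ∀ Y : Fin M → EuclideanSpace ℝ (Fin d),
      ∑ i, ‖(∑ j, P i j • Y j) - (M : ℝ)⁻¹ • ∑ j, Y j‖ ^ 2
        ≤ (1 - ρ) * ∑ i, ‖Y i - (M : ℝ)⁻¹ • ∑ j, Y j‖ ^ 2)
    (Γ Ξ Ψ : ℕ → ℝ)
    (hΓ : ∀ t, Γ t = (M : ℝ)⁻¹ * ∑ i, ‖x t i - (M : ℝ)⁻¹ • ∑ j, x t j‖ ^ 2)
    (hΞ : ∀ t, Ξ t = (M : ℝ)⁻¹ * ∑ i, ‖w t i - (M : ℝ)⁻¹ • ∑ j, w t j‖ ^ 2)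
    (hΨ : ∀ t, Ψ t = (M : ℝ)⁻¹ * ∑ i, ‖g t i - (M : ℝ)⁻¹ • ∑ j, g t j‖ ^ 2)
    :
    ∀ t ≥ 1,
      Ξ (t + 1) ≤ (1 - ρ / 2) * Ξ t + (2 * η ^ 2 * (α t) ^ 2 / ρ) * Ψ t := by
  have : Nonempty (Fin M) := Fin.pos_iff_nonempty.1 hM
  simpa only [consensusDistance, agentAverage, Fintype.card_fin, ← hΞ, ← hΨ] using
    stmt_7_general (fun t ht => funext (hwrec t ht)) hρ
      (mix := fun Y i => ∑ j, P i j • Y j)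
      (by simpa only [agentAverage, Fintype.card_fin] using hP_contract)
end

section
/- Let κ ∈ (0,1], let c₁ > 0, c₂ ≥ 0 and η ≥ 0 be constants with η ≤ κ²/(2c₁), and let (a_t)_{t≥1} be a sequence of nonnegative reals with a₁ = 0 satisfying, for all t ≥ 2: a_t ≤ (1 − κ + c₁²η²/κ)·a_{t−1} + (c₁²η²/κ²)·Σ_{τ=1}^{t−2} (1−κ)^{t−2−τ}·a_τ + c₂²η²/κ³. Then for all t ≥ 1: a_t ≤ 2c₂²η²/κ⁴. -/
/-!
A constant `M` above all earlier terms dominates the next one as soon as it is a supersolution of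
the recursion. The geometric memory of ratio `1 - κ` has total mass at most `1 / κ`, so with
`s = c₁² η² ≤ κ⁴ / 4` the recursion multiplies `M` by at most
`1 - κ + s / κ + s / κ³ ≤ 1 - κ / 2`. The constant `M = 2 c₂² η² / κ⁴` is the fixed point of
`x ↦ (1 - κ / 2) x + c₂² η² / κ³`.
-/

open Finset

section OrderedField

variable {𝕜 : Type*} [Field 𝕜] [LinearOrder 𝕜] [IsStrictOrderedRing 𝕜]

theorem sum_Icc_pow_sub_le_one_div_one_sub {r : 𝕜} (hr₀ : 0 ≤ r) (hr₁ : r < 1) (n : ℕ) :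
    ∑ τ ∈ Icc 1 n, r ^ (n - τ) ≤ 1 / (1 - r) := by
  have reindex : ∑ τ ∈ Icc 1 n, r ^ (n - τ) = ∑ i ∈ range n, r ^ i := by
    rw [← Ico_add_one_right_eq_Icc]
    simpa using sum_Ico_reflect (fun i ↦ r ^ i) 1 (le_refl (n + 1))
  rw [reindex, le_div_iff₀ (sub_pos.mpr hr₁), geom_sum_mul_neg]
  exact sub_le_self 1 (pow_nonneg hr₀ n)

theorem sum_Icc_pow_sub_mul_le_div_one_sub {r M : 𝕜} (hr₀ : 0 ≤ r) (hr₁ : r < 1) (hM : 0 ≤ M)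
    {a : ℕ → 𝕜} {n : ℕ} (ha : ∀ τ ∈ Icc 1 n, a τ ≤ M) :
    ∑ τ ∈ Icc 1 n, r ^ (n - τ) * a τ ≤ M / (1 - r) :=
  calc ∑ τ ∈ Icc 1 n, r ^ (n - τ) * a τ
      ≤ ∑ τ ∈ Icc 1 n, r ^ (n - τ) * M := by gcongr with τ hτ; exact ha τ hτ
    _ = (∑ τ ∈ Icc 1 n, r ^ (n - τ)) * M := (sum_mul ..).symm
    _ ≤ 1 / (1 - r) * M := by gcongr; exact sum_Icc_pow_sub_le_one_div_one_sub hr₀ hr₁ n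
    _ = M / (1 - r) := one_div_mul_eq_div _ _

theorem le_of_geometric_memory_recursion {r α β γ M : 𝕜} (hr₀ : 0 ≤ r) (hr₁ : r < 1)
    (hα : 0 ≤ α) (hβ : 0 ≤ β) (hM : 0 ≤ M) (hsuper : (α + β / (1 - r)) * M + γ ≤ M)
    {a : ℕ → 𝕜} (ha₁ : a 1 ≤ M)
    (hrec : ∀ t ≥ 2, a t ≤ α * a (t - 1) + β * ∑ τ ∈ Icc 1 (t - 2), r ^ (t - 2 - τ) * a τ + γ) :
    ∀ t ≥ 1, a t ≤ M := by
  intro t ht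
  induction t using Nat.strong_induction_on with
  | _ t ih =>
    obtain rfl | ht₂ : t = 1 ∨ 2 ≤ t := by omega
    · exact ha₁
    have hprev : a (t - 1) ≤ M := ih (t - 1) (by omega) (by omega)
    have hmemory : ∑ τ ∈ Icc 1 (t - 2), r ^ (t - 2 - τ) * a τ ≤ M / (1 - r) :=
      sum_Icc_pow_sub_mul_le_div_one_sub hr₀ hr₁ hM fun τ hτ ↦ by
        rw [mem_Icc] at hτ
        exact ih τ (by omega) hτ.1
    calc a t ≤ α * a (t - 1) + β * ∑ τ ∈ Icc 1 (t - 2), r ^ (t - 2 - τ) * a τ + γ := hrec t ht₂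
      _ ≤ α * M + β * (M / (1 - r)) + γ := by gcongr
      _ = (α + β / (1 - r)) * M + γ := by ring
      _ ≤ M := hsuper

theorem one_sub_add_div_add_div_le_one_sub_half {κ s : 𝕜} (hκ₀ : 0 < κ) (hκ₁ : κ ≤ 1)
    (hs : s ≤ κ ^ 4 / 4) : 1 - κ + s / κ + s / κ ^ 2 / κ ≤ 1 - κ / 2 := by
  have hmemory : s / κ ^ 2 / κ ≤ κ / 4 :=
    calc s / κ ^ 2 / κ ≤ κ ^ 4 / 4 / κ ^ 2 / κ := by gcongr
      _ = κ / 4 := by field_simp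
  have hlast : s / κ ≤ κ / 4 :=
    calc s / κ ≤ κ ^ 4 / 4 / κ := by gcongr
      _ = κ ^ 2 * (κ / 4) := by field_simp
      _ ≤ κ / 4 := mul_le_of_le_one_left (by positivity) (pow_le_one₀ hκ₀.le hκ₁)
  linarith

theorem sq_mul_sq_le_of_le_div {κ c η : 𝕜} (hc : 0 < c) (hη : 0 ≤ η)
    (hηκ : η ≤ κ ^ 2 / (2 * c)) : c ^ 2 * η ^ 2 ≤ κ ^ 4 / 4 :=
  calc c ^ 2 * η ^ 2 ≤ c ^ 2 * (κ ^ 2 / (2 * c)) ^ 2 := by gcongr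
    _ = κ ^ 4 / 4 := by field_simp; norm_num

theorem stmt_17_general {κ c₁ c₂ η : 𝕜} (hκ : κ ∈ Set.Ioc 0 1) (hc₁ : 0 < c₁) (hη : 0 ≤ η)
    (hηκ : η ≤ κ ^ 2 / (2 * c₁)) {a : ℕ → 𝕜} (ha₁ : a 1 ≤ 2 * c₂ ^ 2 * η ^ 2 / κ ^ 4)
    (hrec : ∀ t ≥ 2, a t ≤ (1 - κ + c₁ ^ 2 * η ^ 2 / κ) * a (t - 1)
      + (c₁ ^ 2 * η ^ 2 / κ ^ 2) * ∑ τ ∈ Icc 1 (t - 2), (1 - κ) ^ (t - 2 - τ) * a τ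
      + c₂ ^ 2 * η ^ 2 / κ ^ 3) :
    ∀ t ≥ 1, a t ≤ 2 * c₂ ^ 2 * η ^ 2 / κ ^ 4 := by
  obtain ⟨hκ₀, hκ₁⟩ := hκ
  have hr₀ : 0 ≤ 1 - κ := sub_nonneg.mpr hκ₁
  refine le_of_geometric_memory_recursion hr₀ (sub_lt_self 1 hκ₀) (by positivity) (by positivity)
    (by positivity) ?_ ha₁ hrec
  have hgain := one_sub_add_div_add_div_le_one_sub_half hκ₀ hκ₁ (sq_mul_sq_le_of_le_div hc₁ hη hηκ)
  rw [sub_sub_cancel]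
  calc (1 - κ + c₁ ^ 2 * η ^ 2 / κ + c₁ ^ 2 * η ^ 2 / κ ^ 2 / κ) * (2 * c₂ ^ 2 * η ^ 2 / κ ^ 4)
        + c₂ ^ 2 * η ^ 2 / κ ^ 3
      ≤ (1 - κ / 2) * (2 * c₂ ^ 2 * η ^ 2 / κ ^ 4) + c₂ ^ 2 * η ^ 2 / κ ^ 3 := by gcongr
    _ = 2 * c₂ ^ 2 * η ^ 2 / κ ^ 4 := by field_simp; ring

end OrderedField

/-- Let `κ ∈ (0,1]`, constants `c₁ > 0`, `c₂ ≥ 0`, `η ≥ 0` with `η ≤ κ²/(2c₁)`,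
and `(a_t)_{t≥1}` nonnegative reals with `a₁ = 0` satisfying, for all `t ≥ 2`:
`a_t ≤ (1 − κ + c₁²η²/κ)·a_{t−1} + (c₁²η²/κ²)·Σ_{τ=1}^{t−2} (1−κ)^{t−2−τ}·a_τ + c₂²η²/κ³`.
Then for all `t ≥ 1`: `a_t ≤ 2c₂²η²/κ⁴`. -/
theorem stmt_17 (κ c₁ c₂ η : ℝ) (hκ : κ ∈ Set.Ioc (0 : ℝ) 1)
    (hc₁ : 0 < c₁) (hc₂ : 0 ≤ c₂) (hη : 0 ≤ η) (hηκ : η ≤ κ ^ 2 / (2 * c₁))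
    (a : ℕ → ℝ) (ha_nonneg : ∀ t ≥ 1, 0 ≤ a t) (ha1 : a 1 = 0)
    (hrec : ∀ t ≥ 2, a t ≤ (1 - κ + c₁ ^ 2 * η ^ 2 / κ) * a (t - 1)
      + (c₁ ^ 2 * η ^ 2 / κ ^ 2) * ∑ τ ∈ Finset.Icc 1 (t - 2), (1 - κ) ^ (t - 2 - τ) * a τ
      + c₂ ^ 2 * η ^ 2 / κ ^ 3) :
    ∀ t ≥ 1, a t ≤ 2 * c₂ ^ 2 * η ^ 2 / κ ^ 4 :=
  stmt_17_general hκ hc₁ hη hηκ (by rw [ha1]; positivity) hrec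
end
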